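/- Let (X,Σ,μ,T) be an ergodic measure-preserving ℤ^d-system. Then (X,μ,T) has discrete spectrum if and only if no f ∈ L²(X,μ) is μ-mean sensitive (equivalently, L²(X,μ) = H_ap = H_ms^c). -/

import Mathlib

open MeasureTheory Filter Finset Metric
open scoped Classical

noncomputable section

/-- The box `{0,…,n−1}^d` inside `ℤ^d`. -/
def Fbox (d n : ℕ) : Finset (Fin d → ℤ) :=
  Fintype.piFinset fun _ => Finset.Icc (0 : ℤ) ((n : ℤ) - 1)

/-- Upper density of a subset of `ℤ^d` along the boxes `F_n`. -/
def upperDensity (d : ℕ) (S : Set (Fin d → ℤ)) : ℝ :=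
  Filter.limsup
    (fun n : ℕ => (((Fbox d n).filter (fun j => j ∈ S)).card : ℝ) / ((Fbox d n).card : ℝ))
    Filter.atTop

/-- Lower density of a subset of `ℤ^d` along the boxes `F_n`. -/
def lowerDensity (d : ℕ) (S : Set (Fin d → ℤ)) : ℝ :=
  Filter.liminf
    (fun n : ℕ => (((Fbox d n).filter (fun j => j ∈ S)).card : ℝ) / ((Fbox d n).card : ℝ))
    Filter.atTop

variable {X : Type*}

/-- The pseudometric `d_f(x,y) = limsup_n ((1/|F_n|) Σ_{j∈F_n} |f(T^j x) − f(T^j y)|²)^{1/2}`. -/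
def dF {d : ℕ} (T : (Fin d → ℤ) → X → X) (f : X → ℂ) (x y : X) : ℝ :=
  Filter.limsup (fun n : ℕ =>
    Real.sqrt ((∑ j ∈ Fbox d n, ‖f (T j x) - f (T j y)‖ ^ 2) / ((Fbox d n).card : ℝ)))
    Filter.atTop

/-- `x` is a generic point for `|f|²`:
the Birkhoff averages of `|f|²` along `x` converge to `∫ |f|² dμ`. -/
def genericSq {d : ℕ} [MeasurableSpace X] (μ : Measure X) (T : (Fin d → ℤ) → X → X)
    (f : X → ℂ) (x : X) : Prop :=
  Filter.Tendsto
    (fun n : ℕ => (∑ j ∈ Fbox d n, ‖f (T j x)‖ ^ 2) / ((Fbox d n).card : ℝ))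
    Filter.atTop (nhds (∫ y, ‖f y‖ ^ 2 ∂μ))

/-- `ε` is a `μ`-sensitivity constant for `f`: every positive measure set contains two
generic points `x, y` with `d_f(x,y) > ε`. -/
def SensitivityConstant {d : ℕ} [MeasurableSpace X] (μ : Measure X)
    (T : (Fin d → ℤ) → X → X) (f : X → ℂ) (ε : ℝ) : Prop :=
  0 < ε ∧ ∀ A : Set X, MeasurableSet A → 0 < μ A →
    ∃ x ∈ A, ∃ y ∈ A, genericSq μ T f x ∧ genericSq μ T f y ∧ ε < dF T f x y

/-- `f` is `μ`-mean sensitive (`f ∈ H_ms`). -/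
def MeanSensitiveFun {d : ℕ} [MeasurableSpace X] (μ : Measure X)
    (T : (Fin d → ℤ) → X → X) (f : X → ℂ) : Prop :=
  ∃ ε : ℝ, SensitivityConstant μ T f ε

/-- `g ∈ L²(X,μ)` is an eigenfunction of the action: `g ≠ 0` and there is `w ∈ ℝ^d` with
`g ∘ T^j = e^{2πi⟨w,j⟩} g` a.e. for all `j`. -/
def IsEigenfunction {d : ℕ} [MeasurableSpace X] (μ : Measure X)
    (T : (Fin d → ℤ) → X → X) (g : Lp ℂ 2 μ) : Prop :=
  g ≠ 0 ∧ ∃ w : Fin d → ℝ, ∀ j : Fin d → ℤ,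
    (g : X → ℂ) ∘ T j =ᵐ[μ]
      fun x => Complex.exp (2 * Real.pi * Complex.I * ∑ k, (w k : ℂ) * (j k : ℂ)) * (g : X → ℂ) x

/-- The system has discrete spectrum: there is an orthonormal (Hilbert) basis of `L²(X,μ)`
consisting of eigenfunctions. -/
def HasDiscreteSpectrum {d : ℕ} [MeasurableSpace X] (μ : Measure X)
    (T : (Fin d → ℤ) → X → X) : Prop :=
  ∃ (ι : Type) (b : HilbertBasis ι ℂ (Lp ℂ 2 μ)), ∀ i : ι, IsEigenfunction μ T (b i)

lemma card_Fbox (d n : ℕ) : (Fbox d n).card = n ^ d := by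
  simp [Fbox, Fintype.card_piFinset]

lemma mem_Fbox {d n : ℕ} {j : Fin d → ℤ} : j ∈ Fbox d n ↔ ∀ k, 0 ≤ j k ∧ j k < n := by
  simp only [Fbox, Fintype.mem_piFinset, Finset.mem_Icc]
  exact forall_congr' fun k => by omega

/-- Inner box. -/
def Ibox (d m n : ℕ) : Finset (Fin d → ℤ) :=
  Fintype.piFinset fun _ => Finset.Icc (m : ℤ) ((n : ℤ) - 1 - m)

lemma card_Ibox (d m n : ℕ) : (Ibox d m n).card = (n - 2 * m) ^ d := by
  simp only [Ibox, Fintype.card_piFinset, Int.card_Icc, Finset.prod_const, Finset.card_univ,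
    Fintype.card_fin]
  congr 1
  omega

lemma mem_Ibox {d m n : ℕ} {j : Fin d → ℤ} :
    j ∈ Ibox d m n ↔ ∀ k, (m : ℤ) ≤ j k ∧ j k + m < n := by
  simp only [Ibox, Fintype.mem_piFinset, Finset.mem_Icc]
  exact forall_congr' fun k => by omega

lemma tendsto_ratio (d m : ℕ) :
    Tendsto (fun n : ℕ => 1 - (((n - 2 * m : ℕ) : ℝ) ^ d) / ((n : ℝ) ^ d)) atTop (nhds 0) := by
  have h1 : Tendsto (fun n : ℕ => (((n - 2 * m : ℕ) : ℝ)) / (n : ℝ)) atTop (nhds 1) := by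
    have h2 : Tendsto (fun n : ℕ => 1 - ((2 * m : ℕ) : ℝ) / (n : ℝ)) atTop (nhds (1 - 0)) :=
      tendsto_const_nhds.sub (tendsto_const_div_atTop_nhds_zero_nat _)
    rw [sub_zero] at h2
    refine h2.congr' ?_
    filter_upwards [eventually_ge_atTop (2 * m + 1)] with n hn
    have : (n : ℝ) ≠ 0 := Nat.cast_ne_zero.2 (by omega)
    rw [Nat.cast_sub (by omega)]
    field_simp
  have h3 := (h1.pow d).const_sub 1
  simpa [div_pow] using h3

lemma sum_sub_sum_le {E : Type*} [SeminormedAddCommGroup E] {ι : Type*} [DecidableEq ι]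
    (A B I : Finset ι) (hA : I ⊆ A) (hB : I ⊆ B) (φ : ι → E) (C : ℝ) (hφ : ∀ j, ‖φ j‖ ≤ C) :
    ‖∑ j ∈ A, φ j - ∑ j ∈ B, φ j‖ ≤ (A.card - I.card + (B.card - I.card)) * C := by
  rw [← Finset.sum_sdiff hA, ← Finset.sum_sdiff hB, add_sub_add_right_eq_sub]
  have key : ∀ A : Finset ι, I ⊆ A → ‖∑ j ∈ A \ I, φ j‖ ≤ (A.card - I.card : ℝ) * C := by
    intro A hA
    refine (norm_sum_le_of_le _ fun j _ => hφ j).trans ?_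
    rw [Finset.sum_const, Finset.card_sdiff_of_subset hA, nsmul_eq_mul,
      Nat.cast_sub (Finset.card_le_card hA)]
  refine (norm_sub_le _ _).trans ?_
  rw [add_mul]
  exact add_le_add (key A hA) (key B hB)

/-- Averages over boxes of a bounded function are asymptotically translation invariant. -/
lemma folner_avg {d : ℕ} {E : Type*} [SeminormedAddCommGroup E] [NormedSpace ℝ E]
    (φ : (Fin d → ℤ) → E) (C : ℝ) (hφ : ∀ j, ‖φ j‖ ≤ C) (k : Fin d → ℤ) :
    Tendsto (fun n : ℕ => ((Fbox d n).card : ℝ)⁻¹ • ∑ j ∈ Fbox d n, φ (j + k) -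
      ((Fbox d n).card : ℝ)⁻¹ • ∑ j ∈ Fbox d n, φ j) atTop (nhds 0) := by
  set m : ℕ := ∑ i, (k i).natAbs with hm
  have hkm : ∀ i, |k i| ≤ m := fun i => by
    rw [Int.abs_eq_natAbs]
    exact_mod_cast Finset.single_le_sum (f := fun i => (k i).natAbs) (fun _ _ => Nat.zero_le _)
      (Finset.mem_univ i)
  have h0 := (tendsto_ratio d m).const_mul (2 * C)
  rw [mul_zero] at h0
  refine squeeze_zero_norm' ?_ h0
  filter_upwards [eventually_ge_atTop 1] with n hn
  have hpos : (0 : ℝ) < (n : ℝ) ^ d := by positivity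
  rw [← smul_sub, norm_smul]
  have e1 : ∑ j ∈ Fbox d n, φ (j + k) = ∑ j ∈ (Fbox d n).map (addRightEmbedding k), φ j := by
    rw [Finset.sum_map]; rfl
  rw [e1]
  have hA : Ibox d m n ⊆ (Fbox d n).map (addRightEmbedding k) := by
    intro j hj
    rw [mem_Ibox] at hj
    rw [Finset.mem_map]
    refine ⟨j - k, mem_Fbox.2 fun i => ?_, by simp⟩
    have := hj i
    have := abs_le.1 (hkm i)
    simp only [Pi.sub_apply]
    omega
  have hB : Ibox d m n ⊆ Fbox d n := by
    intro j hj
    rw [mem_Ibox] at hj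
    refine mem_Fbox.2 fun i => ?_
    have := hj i
    omega
  have := sum_sub_sum_le _ _ _ hA hB φ C hφ
  rw [Finset.card_map, card_Ibox, card_Fbox] at this
  rw [card_Fbox]
  push_cast at this ⊢
  rw [norm_inv, Real.norm_of_nonneg hpos.le]
  refine (mul_le_mul_of_nonneg_left this (inv_nonneg.2 hpos.le)).trans_eq ?_
  field_simp
  ring

set_option linter.unusedSectionVars false

section dir2
variable {d : ℕ} [MeasurableSpace X] {μ : Measure X} [IsProbabilityMeasure μ]
    {T : (Fin d → ℤ) → X → X}

/-- Ergodic average. -/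
def avgF (T : (Fin d → ℤ) → X → X) (h : X → ℝ) (n : ℕ) (x : X) : ℝ :=
  (∑ j ∈ Fbox d n, h (T j x)) / ((Fbox d n).card : ℝ)

lemma measurable_avgF (hT : ∀ j, MeasurePreserving (T j) μ μ) {h : X → ℝ} (hh : Measurable h)
    (n : ℕ) : Measurable (avgF T h n) := by
  unfold avgF
  refine Measurable.div_const ?_ _
  exact Finset.measurable_sum _ fun j _ => hh.comp (hT j).measurable

lemma abs_avgF_le {h : X → ℝ} {C : ℝ} (hC : ∀ x, |h x| ≤ C) (n : ℕ) (x : X) :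
    |avgF T h n x| ≤ C := by
  have hC0 : 0 ≤ C := (abs_nonneg _).trans (hC x)
  unfold avgF
  rw [abs_div, Nat.abs_cast]
  refine div_le_of_le_mul₀ (by positivity) hC0 ?_
  refine (Finset.abs_sum_le_sum_abs _ _).trans ?_
  refine (Finset.sum_le_card_nsmul _ _ C fun j _ => hC _).trans_eq ?_
  rw [nsmul_eq_mul, mul_comm]

lemma integral_avgF (hT : ∀ j, MeasurePreserving (T j) μ μ) {h : X → ℝ} (hh : Integrable h μ)
    {n : ℕ} (hn : 1 ≤ n) : ∫ x, avgF T h n x ∂μ = ∫ x, h x ∂μ := by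
  unfold avgF
  rw [integral_div, integral_finsetSum (f := fun j x => h (T j x)) _
    fun j _ => (hT j).integrable_comp_of_integrable hh]
  have : ∀ j, ∫ x, h (T j x) ∂μ = ∫ x, h x ∂μ := by
    intro j
    have h1 := integral_map (μ := μ) (f := h) (hT j).measurable.aemeasurable
      (by rw [(hT j).map_eq]; exact hh.1)
    rw [(hT j).map_eq] at h1
    exact h1.symm
  simp only [this, Finset.sum_const, nsmul_eq_mul, card_Fbox]
  have : ((n ^ d : ℕ) : ℝ) ≠ 0 := by positivity
  field_simp

lemma generic_null (hT : ∀ j, MeasurePreserving (T j) μ μ)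
    (hTadd : ∀ i j, T (i + j) = T i ∘ T j)
    (herg : ∀ A : Set X, MeasurableSet A → (∀ j, T j ⁻¹' A = A) → μ A = 0 ∨ μ A = 1)
    {h : X → ℝ} (hh : Measurable h) {C : ℝ} (hC : ∀ x, |h x| ≤ C) {q : ℝ}
    (hq : q < ∫ x, h x ∂μ) :
    μ {x | Tendsto (fun n => max (avgF T h n x - q) 0) atTop (nhds 0)} = 0 := by
  have hInt : Integrable h μ := Integrable.of_bound hh.aestronglyMeasurable C
    (Eventually.of_forall fun x => hC x)
  have hmeas : ∀ n, Measurable (fun x => max (avgF T h n x - q) 0) := fun n =>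
    ((measurable_avgF hT hh n).sub_const q).max measurable_const
  have hms : MeasurableSet {x | Tendsto (fun n => max (avgF T h n x - q) 0) atTop (nhds 0)} :=
    measurableSet_tendsto _ hmeas
  have hinv : ∀ k, T k ⁻¹' {x | Tendsto (fun n => max (avgF T h n x - q) 0) atTop (nhds 0)} =
      {x | Tendsto (fun n => max (avgF T h n x - q) 0) atTop (nhds 0)} := by
    intro k
    ext x
    simp only [Set.mem_preimage, Set.mem_ofPred_eq]
    have hf := folner_avg (fun j => h (T j x)) C (fun j => hC _) k
    have hd : Tendsto (fun n => avgF T h n (T k x) - avgF T h n x) atTop (nhds 0) := by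
      refine hf.congr fun n => ?_
      simp only [avgF, hTadd, smul_eq_mul, Function.comp_apply]
      ring
    have hd2 : Tendsto (fun n => max (avgF T h n (T k x) - q) 0 - max (avgF T h n x - q) 0)
        atTop (nhds 0) := by
      refine squeeze_zero_norm (fun n => ?_) (by simpa using hd.abs)
      rw [Real.norm_eq_abs]
      refine (abs_max_sub_max_le_abs _ _ _).trans_eq ?_
      congr 1
      ring
    constructor
    · intro hx
      simpa using hx.sub hd2
    · intro hx
      simpa using hx.add hd2
  rcases herg _ hms hinv with h0 | h1
  · exact h0
  · exfalso
    have hae : ∀ᵐ x ∂μ, Tendsto (fun n => max (avgF T h n x - q) 0) atTop (nhds 0) := by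
      rw [← prob_compl_eq_zero_iff hms] at h1
      exact h1
    have hlim := tendsto_integral_of_dominated_convergence (μ := μ) (fun _ => C + |q|)
      (fun n => (hmeas n).aestronglyMeasurable) (integrable_const _)
      (fun n => Eventually.of_forall fun x => by
        have := abs_le.1 (abs_avgF_le (T := T) hC n x)
        have hC0 : 0 ≤ C := (abs_nonneg _).trans (hC x)
        rw [Real.norm_of_nonneg (le_max_right _ _)]
        refine max_le ?_ (by positivity)
        have := neg_abs_le q
        linarith) hae
    rw [integral_zero] at hlim
    have hge : ∀ᶠ n : ℕ in atTop,
        (∫ x, h x ∂μ) - q ≤ ∫ x, max (avgF T h n x - q) 0 ∂μ := by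
      filter_upwards [eventually_ge_atTop 1] with n hn
      have hi : Integrable (avgF T h n) μ := Integrable.of_bound
        (measurable_avgF hT hh n).aestronglyMeasurable C
        (Eventually.of_forall fun x => abs_avgF_le hC n x)
      have h2 : Integrable (fun x => avgF T h n x - q) μ := hi.sub (integrable_const q)
      have e : (∫ x, h x ∂μ) - q = ∫ x, (avgF T h n x - q) ∂μ := by
        rw [integral_sub hi (integrable_const q), integral_avgF hT hInt hn]
        simp
      rw [e]
      exact integral_mono h2 (h2.sup (integrable_const 0)) fun x => le_max_left _ _
    have := ge_of_tendsto hlim hge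
    linarith

/-- The Koopman operators. -/
def Koop (hT : ∀ j, MeasurePreserving (T j) μ μ) (j : Fin d → ℤ) :
    Lp ℂ 2 μ →ₗᵢ[ℂ] Lp ℂ 2 μ := Lp.compMeasurePreservingₗᵢ ℂ (T j) (hT j)

lemma Koop_coe (hT : ∀ j, MeasurePreserving (T j) μ μ) (j : Fin d → ℤ) (g : Lp ℂ 2 μ) :
    (Koop hT j g : X → ℂ) =ᵐ[μ] (g : X → ℂ) ∘ T j :=
  Lp.coeFn_compMeasurePreserving g (hT j)

lemma Koop_add (hT : ∀ j, MeasurePreserving (T j) μ μ) (hTadd : ∀ i j, T (i + j) = T i ∘ T j)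
    (i j : Fin d → ℤ) (g : Lp ℂ 2 μ) : Koop hT (i + j) g = Koop hT i (Koop hT j g) := by
  apply Lp.ext
  refine (Koop_coe hT _ g).trans ?_
  refine EventuallyEq.trans ?_ (Koop_coe hT _ _).symm
  have h1 := (hT i).quasiMeasurePreserving.ae_eq_comp (Koop_coe hT j g)
  refine EventuallyEq.trans ?_ h1.symm
  rw [add_comm, hTadd]
  rfl

lemma Koop_zero (hT : ∀ j, MeasurePreserving (T j) μ μ) (hTadd : ∀ i j, T (i + j) = T i ∘ T j)
    (g : Lp ℂ 2 μ) : Koop hT 0 g = g := by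
  apply (Koop hT 0).injective
  rw [← Koop_add hT hTadd, add_zero]

/-- A unimodular function which is not mean sensitive has totally bounded orbit. -/
lemma totallyBounded_orbit (hT : ∀ j, MeasurePreserving (T j) μ μ)
    (hTadd : ∀ i j, T (i + j) = T i ∘ T j)
    (herg : ∀ A : Set X, MeasurableSet A → (∀ j, T j ⁻¹' A = A) → μ A = 0 ∨ μ A = 1)
    {f : X → ℂ} (hf : Measurable f) (hf1 : ∀ x, ‖f x‖ = 1) (hf2 : MemLp f 2 μ)
    (hns : ¬ MeanSensitiveFun μ T f) :
    TotallyBounded (Set.range fun j => Koop hT j (hf2.toLp f)) := by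
  have hgen : ∀ x, genericSq μ T f x := by
    intro x
    unfold genericSq
    simp only [hf1, one_pow, integral_const, probReal_univ, smul_eq_mul, mul_one,
      Finset.sum_const, nsmul_eq_mul]
    refine tendsto_const_nhds.congr' ?_
    filter_upwards [eventually_ge_atTop 1] with n hn
    rw [card_Fbox, div_self]
    positivity
  rw [Metric.totallyBounded_iff]
  intro ε hε
  by_contra hcon
  push Not at hcon
  -- separated sequence
  obtain ⟨u, -, hu⟩ := exists_seq_of_forall_finset_exists (fun _ : Fin d → ℤ => True)
    (fun i j => ε ≤ dist (Koop hT j (hf2.toLp f)) (Koop hT i (hf2.toLp f))) (by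
      intro s _
      have := hcon ((s.image fun j => Koop hT j (hf2.toLp f)) : Finset _) (Finset.finite_toSet _)
      rw [Set.not_subset] at this
      obtain ⟨_, ⟨j, rfl⟩, hj⟩ := this
      refine ⟨j, trivial, fun i hi => ?_⟩
      by_contra! hlt
      apply hj
      simp only [Set.mem_iUnion]
      exact ⟨_, Finset.mem_coe.2 (Finset.mem_image_of_mem _ hi), hlt⟩)
  -- the set A
  have : ¬ SensitivityConstant μ T f (ε / 2) := fun h => hns ⟨_, h⟩
  unfold SensitivityConstant at this
  push Not at this
  obtain ⟨A, hA, hA0, hAd⟩ := this (by positivity)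
  have hdist : ∀ i j, dist (Koop hT i (hf2.toLp f)) (Koop hT j (hf2.toLp f)) ^ 2 =
      ∫ x, ‖f (T i x) - f (T j x)‖ ^ 2 ∂μ := by
    intro i j
    rw [dist_eq_norm, ← inner_self_eq_norm_sq (𝕜 := ℂ), L2.inner_def, ← integral_re]
    · refine integral_congr_ae ?_
      have h1 := fun i => (Koop_coe hT i (hf2.toLp f)).trans
        ((hT i).quasiMeasurePreserving.ae_eq_comp hf2.coeFn_toLp)
      filter_upwards [h1 i, h1 j, Lp.coeFn_sub (Koop hT i (hf2.toLp f)) (Koop hT j (hf2.toLp f))]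
        with x h1 h2 h3
      rw [h3, inner_self_eq_norm_sq, Pi.sub_apply, h1, h2]
      rfl
    · exact L2.integrable_inner _ _
  have hnull : ∀ i j, ε ≤ dist (Koop hT j (hf2.toLp f)) (Koop hT i (hf2.toLp f)) →
      μ (T i ⁻¹' A ∩ T j ⁻¹' A) = 0 := by
    intro i j hij
    have hb : ∀ x, |‖f (T i x) - f (T j x)‖ ^ 2| ≤ 4 := by
      intro x
      rw [abs_of_nonneg (by positivity)]
      have := norm_sub_le (f (T i x)) (f (T j x))
      rw [hf1, hf1] at this
      nlinarith [norm_nonneg (f (T i x) - f (T j x))]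
    refine measure_mono_null ?_ (generic_null (h := fun x => ‖f (T i x) - f (T j x)‖ ^ 2)
      (q := (ε / 2) ^ 2) hT hTadd herg (by
        exact (((hf.comp (hT i).measurable).sub (hf.comp (hT j).measurable)).norm.pow_const 2))
      hb ?_)
    · rintro x ⟨hxi, hxj⟩
      have hle := hAd _ hxi _ hxj (hgen _) (hgen _)
      unfold dF at hle
      have hav : ∀ n, (∑ k ∈ Fbox d n, ‖f (T k (T i x)) - f (T k (T j x))‖ ^ 2) /
          ((Fbox d n).card : ℝ) = avgF T (fun x => ‖f (T i x) - f (T j x)‖ ^ 2) n x := by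
        intro n
        unfold avgF
        congr 1
        refine Finset.sum_congr rfl fun k _ => ?_
        have e : ∀ i, T k (T i x) = T i (T k x) := fun i => by
          rw [← Function.comp_apply (f := T k), ← hTadd, add_comm, hTadd]; rfl
        rw [e, e]
      simp only [hav] at hle
      simp only [Set.mem_ofPred_eq]
      set a := fun n => avgF T (fun x => ‖f (T i x) - f (T j x)‖ ^ 2) n x with ha
      have hab : ∀ n, |a n| ≤ 4 := fun n => abs_avgF_le hb n x
      have ha0 : ∀ n, 0 ≤ a n := fun n => by
        simp only [ha]; unfold avgF; positivity
      rw [Metric.tendsto_atTop']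
      intro δ hδ
      have hlt : limsup (fun n => Real.sqrt (a n)) atTop < Real.sqrt ((ε / 2) ^ 2 + δ) := by
        refine hle.trans_lt ?_
        apply Real.lt_sqrt_of_sq_lt
        linarith
      have hev := eventually_lt_of_limsup_lt hlt (by
        refine ⟨Real.sqrt 4, ?_⟩
        simp only [eventually_map]
        exact Eventually.of_forall fun n => Real.sqrt_le_sqrt ((le_abs_self _).trans (hab n)))
      obtain ⟨N, hN⟩ := eventually_atTop.1 hev
      refine ⟨N, fun n hn => ?_⟩
      have h1 := hN n hn.le
      rw [Real.sqrt_lt_sqrt_iff (ha0 n)] at h1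
      rw [Real.dist_eq, sub_zero, abs_of_nonneg (le_max_right _ _)]
      exact max_lt (by linarith) hδ
    · rw [← hdist, dist_comm]
      nlinarith
  -- disjointness
  have hdis : Pairwise (Function.onFun (AEDisjoint μ) fun n => T (u n) ⁻¹' A) := by
    intro m n hmn
    rcases lt_or_gt_of_ne hmn with h | h
    · exact hnull _ _ (hu m n h)
    · exact AEDisjoint.symm (hnull _ _ (hu n m h))
  have hU := measure_iUnion₀ hdis fun n => ((hT (u n)).measurable hA).nullMeasurableSet
  have : ∀ n, μ (T (u n) ⁻¹' A) = μ A := fun n => (hT (u n)).measure_preimage hA.nullMeasurableSet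
  simp only [this] at hU
  rw [ENNReal.tsum_const_eq_top_of_ne_zero hA0.ne'] at hU
  exact measure_ne_top _ _ hU

end dir2

section abstractHilbert

/-- Commuting endomorphisms preserving a nonzero finite-dimensional subspace have a common
eigenvector in it. -/
lemma exists_common_eigenvector {ι H : Type*} [AddCommGroup H] [Module ℂ H]
    (U : ι → H →ₗ[ℂ] H) (hU : ∀ i j v, U i (U j v) = U j (U i v))
    (V : Submodule ℂ H) [FiniteDimensional ℂ V] (hV : V ≠ ⊥) (hinv : ∀ i, ∀ v ∈ V, U i v ∈ V) :
    ∃ v ∈ V, v ≠ 0 ∧ ∃ χ : ι → ℂ, ∀ i, U i v = χ i • v := by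
  let P : Submodule ℂ H → Prop := fun W => W ≤ V ∧ W ≠ ⊥ ∧ ∀ i, ∀ v ∈ W, U i v ∈ W
  have hex : ∃ n, ∃ W, P W ∧ Module.finrank ℂ W = n := ⟨_, V, ⟨le_rfl, hV, hinv⟩, rfl⟩
  obtain ⟨W, hW, hWn⟩ := Nat.find_spec hex
  have hmin : ∀ W', P W' → Module.finrank ℂ W ≤ Module.finrank ℂ W' := by
    intro W' hW'
    rw [hWn]
    exact Nat.find_min' hex ⟨W', hW', rfl⟩
  have hWfin : FiniteDimensional ℂ W := Submodule.finiteDimensional_of_le hW.1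
  have hWnt : Nontrivial W := Submodule.nontrivial_iff_ne_bot.2 hW.2.1
  have hχ : ∀ i, ∃ c : ℂ, ∀ v ∈ W, U i v = c • v := by
    intro i
    obtain ⟨c, hc⟩ := Module.End.exists_eigenvalue ((U i).restrict (hW.2.2 i))
    obtain ⟨w, hw⟩ := hc.exists_hasEigenvector
    have hw1 : U i (w : H) = c • (w : H) := by
      have := congrArg (Subtype.val) hw.apply_eq_smul
      simpa using this
    have hw0 : (w : H) ≠ 0 := fun h => hw.2 (Subtype.ext h)
    let W' : Submodule ℂ H := W ⊓ LinearMap.ker (U i - c • LinearMap.id)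
    have hmem : ∀ v, v ∈ W' ↔ v ∈ W ∧ U i v = c • v := by
      intro v
      simp [W', sub_eq_zero]
    have hP : P W' := by
      refine ⟨inf_le_left.trans hW.1, ?_, ?_⟩
      · rw [Submodule.ne_bot_iff]
        exact ⟨w, (hmem _).2 ⟨w.2, hw1⟩, hw0⟩
      · intro j v hv
        rw [hmem] at hv ⊢
        refine ⟨hW.2.2 j v hv.1, ?_⟩
        rw [hU, hv.2, map_smul]
    have heq : W' = W := Submodule.eq_of_le_of_finrank_le inf_le_left (hmin W' hP)
    refine ⟨c, fun v hv => ?_⟩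
    rw [← heq, hmem] at hv
    exact hv.2
  choose χ hχ using hχ
  obtain ⟨v, hv, hv0⟩ := (Submodule.ne_bot_iff _).1 hW.2.1
  exact ⟨v, hW.1 hv, hv0, χ, fun i => hχ i v hv⟩

variable {d : ℕ} {H : Type*} [NormedAddCommGroup H] [InnerProductSpace ℂ H]

/-- averaged rank one operators -/
def Sop (U : (Fin d → ℤ) → H →ₗᵢ[ℂ] H) (f : H) (n : ℕ) : H →L[ℂ] H :=
  ((Fbox d n).card : ℝ)⁻¹ • ∑ j ∈ Fbox d n, InnerProductSpace.rankOne ℂ (U j f) (U j f)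

lemma Sop_apply (U : (Fin d → ℤ) → H →ₗᵢ[ℂ] H) (f : H) (n : ℕ) (v : H) :
    Sop U f n v = ((Fbox d n).card : ℝ)⁻¹ • ∑ j ∈ Fbox d n, inner ℂ (U j f) v • (U j f) := by
  simp [Sop]

lemma compact_rankOne (u : H) : IsCompactOperator (InnerProductSpace.rankOne ℂ u u) := by
  rw [InnerProductSpace.rankOne_def']
  exact (isCompactOperator_of_locallyCompactSpace_dom (innerSL ℂ u)).clm_comp
    (ContinuousLinearMap.toSpanSingleton ℂ u)

lemma compact_Sop (U : (Fin d → ℤ) → H →ₗᵢ[ℂ] H) (f : H) (n : ℕ) :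
    IsCompactOperator (Sop U f n) := by
  unfold Sop
  have : IsCompactOperator
      (∑ j ∈ Fbox d n, InnerProductSpace.rankOne ℂ (U j f) (U j f) : H →L[ℂ] H) := by
    have h := Submodule.sum_mem (compactOperator (RingHom.id ℂ) H H) (t := Fbox d n)
      (f := fun j => (InnerProductSpace.rankOne ℂ (U j f) (U j f) : H →L[ℂ] H))
      (fun j _ => compact_rankOne (U j f))
    exact h
  exact this.smul _

lemma symm_Sop (U : (Fin d → ℤ) → H →ₗᵢ[ℂ] H) (f : H) (n : ℕ) (x y : H) :
    inner ℂ (Sop U f n x) y = inner ℂ x (Sop U f n y) := by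
  rw [Sop_apply, Sop_apply, ← Complex.coe_smul, ← Complex.coe_smul, inner_smul_left,
    inner_smul_right, sum_inner, inner_sum, Complex.conj_ofReal]
  congr 1
  refine Finset.sum_congr rfl fun j _ => ?_
  rw [inner_smul_left, inner_smul_right, inner_conj_symm, mul_comm]

lemma re_inner_Sop (U : (Fin d → ℤ) → H →ₗᵢ[ℂ] H) (f : H) (n : ℕ) (x : H) :
    (inner ℂ x (Sop U f n x)).re =
      ((Fbox d n).card : ℝ)⁻¹ * ∑ j ∈ Fbox d n, ‖inner ℂ (U j f) x‖ ^ 2 := by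
  rw [Sop_apply, ← Complex.coe_smul, inner_smul_right, inner_sum, Complex.re_ofReal_mul,
    Complex.re_sum]
  congr 1
  refine Finset.sum_congr rfl fun j _ => ?_
  rw [inner_smul_right, ← inner_conj_symm x (U j f), Complex.mul_conj, Complex.ofReal_re,
    Complex.normSq_eq_norm_sq]

theorem exists_eigenvector_of_totallyBounded [CompleteSpace H]
    (U : (Fin d → ℤ) → H →ₗᵢ[ℂ] H) (hUadd : ∀ i j v, U (i + j) v = U i (U j v))
    (f : H) (hf : f ≠ 0) (htb : TotallyBounded (Set.range fun j => U j f)) :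
    ∃ v : H, v ≠ 0 ∧ (∃ χ : (Fin d → ℤ) → ℂ, ∀ j, U j v = χ j • v) ∧
      ¬ ∀ j, inner ℂ (U j f) v = 0 := by
  -- compactness of the convex hull of the rank one operators
  let R : H → (H →L[ℂ] H) := fun u => InnerProductSpace.rankOne ℂ u u
  have hR : Continuous R := by
    rw [continuous_iff_continuousAt]
    intro w
    rw [ContinuousAt, tendsto_iff_norm_sub_tendsto_zero]
    have hlim : Tendsto (fun u : H => ‖u - w‖ * (‖u‖ + ‖w‖)) (nhds w) (nhds 0) := by
      have hc : Continuous (fun u : H => ‖u - w‖ * (‖u‖ + ‖w‖)) := by fun_prop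
      simpa using hc.tendsto w
    refine squeeze_zero (fun _ => norm_nonneg _) (fun u => ?_) hlim
    have e : R u - R w = InnerProductSpace.rankOne ℂ (u - w) u +
        InnerProductSpace.rankOne ℂ w (u - w) := by
      ext z
      simp [R, inner_sub_left, sub_smul, smul_sub]
    rw [e]
    refine (norm_add_le _ _).trans ?_
    rw [InnerProductSpace.norm_rankOne, InnerProductSpace.norm_rankOne]
    linarith
  let O := Set.range fun j => U j f
  have hO : IsCompact (closure O) := TotallyBounded.isCompact_of_isClosed htb.closure isClosed_closure
  have hK : IsCompact (closure (convexHull ℝ (R '' closure O))) := by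
    refine TotallyBounded.isCompact_of_isClosed (TotallyBounded.closure ?_) isClosed_closure
    rw [totallyBounded_convexHull]
    exact (hO.image hR).totallyBounded
  have hmem : ∀ n : ℕ, Sop U f (n + 1) ∈ closure (convexHull ℝ (R '' closure O)) := by
    intro n
    apply subset_closure
    unfold Sop
    rw [Finset.smul_sum]
    refine (convex_convexHull ℝ _).sum_mem (fun j _ => by positivity) ?_ ?_
    · rw [Finset.sum_const, nsmul_eq_mul, card_Fbox, mul_inv_cancel₀]
      positivity
    · intro j _
      exact subset_convexHull ℝ _ ⟨U j f, subset_closure ⟨j, rfl⟩, rfl⟩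
  obtain ⟨S, -, φ, hφ, hS⟩ := hK.tendsto_subseq hmem
  have hSv : ∀ v, Tendsto (fun n => Sop U f (φ n + 1) v) atTop (nhds (S v)) := fun v =>
    ((ContinuousLinearMap.apply ℂ H v).continuous.tendsto S).comp hS
  have hScomp : IsCompactOperator S :=
    isCompactOperator_of_tendsto hS (Eventually.of_forall fun n => compact_Sop U f _)
  have hSsymm : S.IsSymmetric := by
    intro x y
    refine tendsto_nhds_unique ((hSv x).inner tendsto_const_nhds)
      (Tendsto.congr (fun n => ?_) (tendsto_const_nhds.inner (hSv y)))
    exact (symm_Sop U f _ x y).symm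
  have hφ1 : Tendsto (fun n => φ n + 1) atTop atTop :=
    (tendsto_add_atTop_nat 1).comp hφ.tendsto_atTop
  have hcomm : ∀ k v, S (U k v) = U k (S v) := by
    intro k v
    have h1 := ((U k).continuous.tendsto _).comp (hSv v)
    have h2 := hSv (U k v)
    have h3 := folner_avg (fun j => inner ℂ (U j f) (U k v) • U j f) (‖f‖ * ‖v‖ * ‖f‖) (fun j => by
      rw [norm_smul, LinearIsometry.norm_map]
      gcongr
      refine (norm_inner_le_norm _ _).trans ?_
      simp) k
    have h4 := h3.comp hφ1
    have h5 : Tendsto (fun n => U k (Sop U f (φ n + 1) v) - Sop U f (φ n + 1) (U k v)) atTop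
        (nhds 0) := by
      refine h4.congr fun n => ?_
      simp only [Function.comp_apply, Sop_apply]
      congr 1
      have e : ∀ (r : ℝ) (w : H), U k (r • w) = r • U k w := fun r w => by
        rw [← Complex.coe_smul, map_smul, Complex.coe_smul]
      rw [e, map_sum]
      congr 1
      refine Finset.sum_congr rfl fun j _ => ?_
      rw [map_smul, add_comm, hUadd, LinearIsometry.inner_map_map]
    have h6 := tendsto_nhds_unique h5 (h1.sub h2)
    exact (sub_eq_zero.1 h6.symm).symm
  have hSne : S ≠ 0 := by
    intro h0
    have hr : 0 < ‖f‖ := norm_pos_iff.2 hf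
    obtain ⟨t, ht, hcov⟩ := Metric.totallyBounded_iff.1 htb (‖f‖ / 2) (by positivity)
    have hlim : Tendsto (fun n => ∑ y ∈ ht.toFinset, (inner ℂ y (Sop U f (φ n + 1) y)).re) atTop
        (nhds (∑ y ∈ ht.toFinset, 0)) := by
      refine tendsto_finsetSum _ fun y _ => ?_
      have h1 : Tendsto (fun n => inner ℂ y (Sop U f (φ n + 1) y)) atTop (nhds (inner ℂ y (S y))) :=
        tendsto_const_nhds.inner (hSv y)
      have h2 := (Complex.continuous_re.tendsto _).comp h1
      simpa [h0, Function.comp_def] using h2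
    rw [Finset.sum_const_zero] at hlim
    have hge : ∀ n, (‖f‖ ^ 2 / 2) ^ 2 ≤
        ∑ y ∈ ht.toFinset, (inner ℂ y (Sop U f (φ n + 1) y)).re := by
      intro n
      simp only [re_inner_Sop]
      rw [← Finset.mul_sum, Finset.sum_comm]
      have hj : ∀ j ∈ Fbox d (φ n + 1), (‖f‖ ^ 2 / 2) ^ 2 ≤
          ∑ y ∈ ht.toFinset, ‖inner ℂ (U j f) y‖ ^ 2 := by
        intro j _
        have := hcov ⟨j, rfl⟩
        simp only [Set.mem_iUnion] at this
        obtain ⟨y, hy, hyb⟩ := this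
        have hle : ‖inner ℂ (U j f) y‖ ^ 2 ≤ ∑ y ∈ ht.toFinset, ‖inner ℂ (U j f) y‖ ^ 2 :=
          Finset.single_le_sum (f := fun y => ‖inner ℂ (U j f) y‖ ^ 2)
            (fun _ _ => by positivity) (ht.mem_toFinset.2 hy)
        refine le_trans ?_ hle
        rw [mem_ball, dist_eq_norm] at hyb
        have e1 : inner ℂ (U j f) y = inner ℂ (U j f) (U j f) - inner ℂ (U j f) (U j f - y) := by
          rw [inner_sub_right]; ring
        have e2 : ‖inner ℂ (U j f) (U j f)‖ = ‖f‖ ^ 2 := by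
          rw [inner_self_eq_norm_sq_to_K]
          simp
        have e3 : ‖inner ℂ (U j f) (U j f - y)‖ ≤ ‖f‖ * (‖f‖ / 2) := by
          refine (norm_inner_le_norm _ _).trans ?_
          rw [LinearIsometry.norm_map]
          gcongr
        have e4 : ‖f‖ ^ 2 / 2 ≤ ‖inner ℂ (U j f) y‖ := by
          rw [e1]
          refine le_trans ?_ (norm_sub_norm_le _ _)
          rw [e2]
          nlinarith
        gcongr
      have hs := Finset.card_nsmul_le_sum _ _ _ hj
      rw [nsmul_eq_mul] at hs
      have hc : (0 : ℝ) < ((Fbox d (φ n + 1)).card : ℝ) := by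
        rw [card_Fbox]; positivity
      rw [← div_eq_inv_mul, le_div_iff₀ hc]
      linarith
    have := ge_of_tendsto' hlim hge
    have : 0 < (‖f‖ ^ 2 / 2) ^ 2 := by positivity
    linarith
  -- nonzero eigenvalue
  have hev : ∃ c, Module.End.HasEigenvalue (S : Module.End ℂ H) c ∧ c ≠ 0 := by
    by_contra! hcon
    exact hSne ((ContinuousLinearMap.eq_zero_of_forall_hasEigenvalue_eq_zero hScomp hSsymm).1 hcon)
  obtain ⟨c, hc, hc0⟩ := hev
  have hfin := ContinuousLinearMap.finite_dimensional_eigenspace hScomp c hc0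
  obtain ⟨v, hvV, hv0, χ, hχ⟩ := exists_common_eigenvector
    (fun j => (U j).toLinearMap) (fun i j v => by
      change U i (U j v) = U j (U i v)
      rw [← hUadd, add_comm, hUadd])
    (Module.End.eigenspace (S : Module.End ℂ H) c) hc (fun j v hv => by
      rw [Module.End.mem_eigenspace_iff] at hv ⊢
      change S v = c • v at hv
      change S (U j v) = c • U j v
      rw [hcomm, hv, map_smul])
  refine ⟨v, hv0, ⟨χ, hχ⟩, fun h0 => ?_⟩
  rw [Module.End.mem_eigenspace_iff] at hvV
  change S v = c • v at hvV
  have hz : S v = 0 := by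
    refine tendsto_nhds_unique (hSv v) (tendsto_const_nhds.congr fun n => ?_)
    rw [Sop_apply]
    simp [h0]
  rw [hz] at hvV
  exact (smul_ne_zero hc0 hv0) hvV.symm

end abstractHilbert

section spectral
variable {d : ℕ} [MeasurableSpace X] {μ : Measure X} [IsProbabilityMeasure μ]
    {T : (Fin d → ℤ) → X → X}

lemma inv_const (hT : ∀ j, MeasurePreserving (T j) μ μ)
    (hTadd : ∀ i j, T (i + j) = T i ∘ T j)
    (herg : ∀ A : Set X, MeasurableSet A → (∀ j, T j ⁻¹' A = A) → μ A = 0 ∨ μ A = 1)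
    {g : X → ℂ} (hg : AEStronglyMeasurable g μ) (hinv : ∀ j, g ∘ T j =ᵐ[μ] g) :
    ∃ c : ℂ, g =ᵐ[μ] fun _ => c := by
  have hg' := hg.ae_eq_mk
  set g' := hg.mk g with hg'def
  have hm : Measurable g' := hg.stronglyMeasurable_mk.measurable
  have hinv' : ∀ j, g' ∘ T j =ᵐ[μ] g' := fun j =>
    ((hT j).quasiMeasurePreserving.ae_eq_comp hg').symm.trans ((hinv j).trans hg')
  have key : ∃ c : ℂ, g' =ᵐ[μ] fun _ => c := by
    refine exists_eventuallyEq_const_of_forall_separating (l := ae μ) MeasurableSet (f := g') ?_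
    intro s hs
    have hA : MeasurableSet (g' ⁻¹' s) := hm hs
    have hAj : ∀ j, (T j ⁻¹' (g' ⁻¹' s) : Set X) =ᵐ[μ] g' ⁻¹' s := by
      intro j
      filter_upwards [hinv' j] with x hx
      have : g' (T j x) = g' x := hx
      apply propext
      change g' (T j x) ∈ s ↔ g' x ∈ s
      rw [this]
    have hA' : (⋂ j, T j ⁻¹' (g' ⁻¹' s) : Set X) =ᵐ[μ] g' ⁻¹' s := by
      have := Filter.EventuallyEq.countable_iInter hAj
      rwa [Set.iInter_const] at this
    have hmA' : MeasurableSet (⋂ j, T j ⁻¹' (g' ⁻¹' s)) :=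
      MeasurableSet.iInter fun j => (hT j).measurable hA
    have hinvA : ∀ k, T k ⁻¹' (⋂ j, T j ⁻¹' (g' ⁻¹' s)) = ⋂ j, T j ⁻¹' (g' ⁻¹' s) := by
      intro k
      ext x
      simp only [Set.preimage_iInter, Set.mem_iInter, Set.mem_preimage]
      have e : ∀ i, T i (T k x) = T (i + k) x := fun i => by rw [hTadd]; rfl
      simp only [e]
      constructor
      · intro h i
        simpa using h (i - k)
      · intro h i
        exact h (i + k)
    rcases herg _ hmA' hinvA with h | h
    · right
      have h0 : μ (g' ⁻¹' s) = 0 := by rw [← measure_congr hA', h]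
      exact measure_eq_zero_iff_ae_notMem.1 h0
    · left
      have h0 : μ (g' ⁻¹' s) = 1 := by rw [← measure_congr hA', h]
      exact (mem_ae_iff_prob_eq_one hA).2 h0
  obtain ⟨c, hc⟩ := key
  exact ⟨c, hg'.trans hc⟩

/-- eigenvectors with given character -/
def EVchi (hT : ∀ j, MeasurePreserving (T j) μ μ) (χ : (Fin d → ℤ) → ℂ) (v : Lp ℂ 2 μ) : Prop :=
  v ≠ 0 ∧ ∀ j, Koop hT j v = χ j • v

lemma EVchi.norm_one {hT : ∀ j, MeasurePreserving (T j) μ μ} {χ : (Fin d → ℤ) → ℂ} {v : Lp ℂ 2 μ}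
    (h : EVchi hT χ v) (j : Fin d → ℤ) : ‖χ j‖ = 1 := by
  have h1 := congrArg norm (h.2 j)
  rw [LinearIsometry.norm_map, norm_smul] at h1
  have : ‖v‖ ≠ 0 := norm_ne_zero_iff.2 h.1
  exact (mul_right_cancel₀ this (by rw [← h1, one_mul]))

lemma EVchi.comp {hT : ∀ j, MeasurePreserving (T j) μ μ} {χ : (Fin d → ℤ) → ℂ} {v : Lp ℂ 2 μ}
    (h : EVchi hT χ v) (j : Fin d → ℤ) : (v : X → ℂ) ∘ T j =ᵐ[μ] fun x => χ j * (v : X → ℂ) x := by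
  refine (Koop_coe hT j v).symm.trans ?_
  rw [h.2 j]
  exact Lp.coeFn_smul _ _

lemma EVchi.add {hT : ∀ j, MeasurePreserving (T j) μ μ} (hTadd : ∀ i j, T (i + j) = T i ∘ T j)
    {χ : (Fin d → ℤ) → ℂ} {v : Lp ℂ 2 μ}
    (h : EVchi hT χ v) (i j : Fin d → ℤ) : χ (i + j) = χ i * χ j := by
  have h1 := Koop_add hT hTadd i j v
  rw [h.2, h.2, map_smul, h.2, smul_smul, mul_comm] at h1
  exact smul_left_injective _ h.1 h1

lemma EVchi.zero {hT : ∀ j, MeasurePreserving (T j) μ μ} (hTadd : ∀ i j, T (i + j) = T i ∘ T j)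
    {χ : (Fin d → ℤ) → ℂ} {v : Lp ℂ 2 μ} (h : EVchi hT χ v) : χ 0 = 1 := by
  have h1 := Koop_zero hT hTadd v
  rw [h.2] at h1
  exact smul_left_injective _ h.1 (h1.trans (one_smul ℂ v).symm)

lemma EVchi.isEigenfunction {hT : ∀ j, MeasurePreserving (T j) μ μ}
    (hTadd : ∀ i j, T (i + j) = T i ∘ T j)
    {χ : (Fin d → ℤ) → ℂ} {v : Lp ℂ 2 μ} (h : EVchi hT χ v) : IsEigenfunction μ T v := by
  refine ⟨h.1, ?_⟩
  have hθ : ∀ k : Fin d, ∃ θ : ℝ, Complex.exp (θ * Complex.I) = χ (Pi.single k 1) := fun k =>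
    (Complex.norm_eq_one_iff _).1 (h.norm_one _)
  choose θ hθ using hθ
  let w : Fin d → ℝ := fun k => θ k / (2 * Real.pi)
  let ψ : (Fin d → ℤ) → ℂ := fun j =>
    Complex.exp (2 * Real.pi * Complex.I * ∑ k, (w k : ℂ) * (j k : ℂ))
  have hψadd : ∀ i j, ψ (i + j) = ψ i * ψ j := by
    intro i j
    simp only [ψ, ← Complex.exp_add, Pi.add_apply, Int.cast_add, mul_add, Finset.sum_add_distrib]
  have hψ0 : ψ 0 = 1 := by simp [ψ]
  let K : AddSubgroup (Fin d → ℤ) :=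
    { carrier := {j | χ j = ψ j}
      zero_mem' := by
        change χ 0 = ψ 0
        rw [h.zero hTadd, hψ0]
      add_mem' := by
        intro a b ha hb
        change χ (a + b) = ψ (a + b)
        change χ a = ψ a at ha
        change χ b = ψ b at hb
        rw [h.add hTadd, hψadd, ha, hb]
      neg_mem' := by
        intro a ha
        change χ (-a) = ψ (-a)
        change χ a = ψ a at ha
        have h1 := h.add hTadd (-a) a
        have h2 := hψadd (-a) a
        rw [neg_add_cancel, h.zero hTadd] at h1
        rw [neg_add_cancel, hψ0] at h2
        have h3 : ψ a ≠ 0 := Complex.exp_ne_zero _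
        rw [ha] at h1
        exact mul_right_cancel₀ h3 (h1.symm.trans h2) }
  have hK : ∀ j, j ∈ K := by
    intro j
    have e : j = ∑ k, j k • (Pi.single k 1 : Fin d → ℤ) := by
      ext i
      simp [Finset.sum_apply, Pi.single_apply]
    rw [e]
    refine AddSubgroup.sum_mem _ fun k _ => AddSubgroup.zsmul_mem _ ?_ _
    change χ (Pi.single k 1) = ψ (Pi.single k 1)
    rw [← hθ]
    simp only [ψ, w]
    congr 1
    rw [Finset.sum_eq_single k]
    · have : (Real.pi : ℂ) ≠ 0 := by exact_mod_cast Real.pi_ne_zero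
      simp
      field_simp
    · intro b _ hb
      simp [Pi.single_apply, hb]
    · simp
  refine ⟨w, fun j => ?_⟩
  have : χ j = ψ j := hK j
  have h2 := h.comp j
  rw [this] at h2
  exact h2

lemma EVchi.unique {hT : ∀ j, MeasurePreserving (T j) μ μ}
    (hTadd : ∀ i j, T (i + j) = T i ∘ T j)
    (herg : ∀ A : Set X, MeasurableSet A → (∀ j, T j ⁻¹' A = A) → μ A = 0 ∨ μ A = 1)
    {χ : (Fin d → ℤ) → ℂ} {v v' : Lp ℂ 2 μ} (h : EVchi hT χ v) (h' : EVchi hT χ v') :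
    ∃ c : ℂ, v = c • v' := by
  have hne : ∀ᵐ x ∂μ, (v' : X → ℂ) x ≠ 0 := by
    obtain ⟨c, hc⟩ := inv_const hT hTadd herg (g := fun x => ((‖(v' : X → ℂ) x‖ : ℝ) : ℂ))
      (Complex.continuous_ofReal.comp_aestronglyMeasurable
        (Lp.aestronglyMeasurable v').norm) (by
        intro j
        filter_upwards [h'.comp j] with x hx
        have hx' : (v' : X → ℂ) (T j x) = χ j * (v' : X → ℂ) x := hx
        change ((‖(v' : X → ℂ) (T j x)‖ : ℝ) : ℂ) = _
        rw [hx', norm_mul, h'.norm_one, one_mul])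
    by_cases hc0 : c = 0
    · exfalso
      apply h'.1
      rw [Lp.eq_zero_iff_ae_eq_zero]
      filter_upwards [hc] with x hx
      have hx' : ((‖(v' : X → ℂ) x‖ : ℝ) : ℂ) = 0 := hx.trans hc0
      simpa using hx'
    · filter_upwards [hc] with x hx h0
      apply hc0
      have hx' : ((‖(v' : X → ℂ) x‖ : ℝ) : ℂ) = c := hx
      rw [← hx', h0]
      simp
  obtain ⟨c, hc⟩ := inv_const hT hTadd herg (g := fun x => (v : X → ℂ) x / (v' : X → ℂ) x)
    (((Lp.aestronglyMeasurable v).aemeasurable.div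
      (Lp.aestronglyMeasurable v').aemeasurable).aestronglyMeasurable) (by
      intro j
      filter_upwards [h.comp j, h'.comp j] with x hx hx'
      have e : (v : X → ℂ) (T j x) = χ j * (v : X → ℂ) x := hx
      have e' : (v' : X → ℂ) (T j x) = χ j * (v' : X → ℂ) x := hx'
      change (v : X → ℂ) (T j x) / (v' : X → ℂ) (T j x) = _
      rw [e, e', mul_div_mul_left]
      intro h0
      have := h.norm_one j
      rw [h0] at this
      simp at this)
  refine ⟨c, Lp.ext ?_⟩
  filter_upwards [hc, hne, Lp.coeFn_smul c v'] with x hx hn hs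
  have hx' : (v : X → ℂ) x / (v' : X → ℂ) x = c := hx
  rw [hs, Pi.smul_apply, smul_eq_mul, ← hx', div_mul_cancel₀ _ hn]

/-- the span of all the eigenvectors -/
def Kperp (hT : ∀ j, MeasurePreserving (T j) μ μ) : Submodule ℂ (Lp ℂ 2 μ) :=
  (Submodule.span ℂ {v | ∃ χ, EVchi hT χ v})ᗮ

lemma mem_Kperp {hT : ∀ j, MeasurePreserving (T j) μ μ} {b : Lp ℂ 2 μ} :
    b ∈ Kperp hT ↔ ∀ v χ, EVchi hT χ v → inner ℂ v b = 0 := by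
  unfold Kperp
  rw [Submodule.mem_orthogonal]
  constructor
  · intro h v χ hv
    exact h v (Submodule.subset_span ⟨χ, hv⟩)
  · intro h u hu
    induction hu using Submodule.span_induction with
    | mem x hx => obtain ⟨χ, hx⟩ := hx; exact h x χ hx
    | zero => simp
    | add x y _ _ hx hy => rw [inner_add_left, hx, hy, add_zero]
    | smul a x _ hx => rw [inner_smul_left, hx, mul_zero]

lemma Koop_mem_Kperp {hT : ∀ j, MeasurePreserving (T j) μ μ} {b : Lp ℂ 2 μ}
    (hb : b ∈ Kperp hT) (j : Fin d → ℤ) : Koop hT j b ∈ Kperp hT := by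
  rw [mem_Kperp] at hb ⊢
  intro v χ hv
  have h1 : inner ℂ (Koop hT j v) (Koop hT j b) = 0 := by
    rw [LinearIsometry.inner_map_map]
    exact hb v χ hv
  rw [hv.2, inner_smul_left] at h1
  rcases mul_eq_zero.1 h1 with h | h
  · exfalso
    have := hv.norm_one j
    rw [map_eq_zero] at h
    rw [h] at this
    simp at this
  · exact h

lemma mem_Kperp_perp_of_totallyBounded {hT : ∀ j, MeasurePreserving (T j) μ μ}
    (hTadd : ∀ i j, T (i + j) = T i ∘ T j) (f : Lp ℂ 2 μ)
    (htb : TotallyBounded (Set.range fun j => Koop hT j f)) : f ∈ (Kperp hT)ᗮ := by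
  haveI : CompleteSpace (Kperp hT) := by
    unfold Kperp
    infer_instance
  set P := (Kperp hT).starProjection with hP
  have hb : P f ∈ Kperp hT := Submodule.starProjection_apply_mem _ _
  have ha : f - P f ∈ (Kperp hT)ᗮ := Submodule.sub_starProjection_mem_orthogonal f
  have hcomm : ∀ j, P (Koop hT j f) = Koop hT j (P f) := by
    intro j
    refine Submodule.eq_starProjection_of_mem_of_inner_eq_zero (Koop_mem_Kperp hb j) ?_
    intro k hk
    have e : k = Koop hT j (Koop hT (-j) k) := by
      rw [← Koop_add hT hTadd, add_neg_cancel, Koop_zero hT hTadd]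
    rw [e, ← map_sub, LinearIsometry.inner_map_map]
    exact (Submodule.mem_orthogonal' _ _).1 ha _ (Koop_mem_Kperp hk _)
  by_cases h0 : P f = 0
  · rwa [h0, sub_zero] at ha
  · exfalso
    have htb' : TotallyBounded (Set.range fun j => Koop hT j (P f)) := by
      have := htb.image P.uniformContinuous
      rw [← Set.range_comp] at this
      simpa only [Function.comp_def, hcomm] using this
    obtain ⟨v, hv0, ⟨χ, hχ⟩, hn⟩ := exists_eigenvector_of_totallyBounded (Koop hT)
      (Koop_add hT hTadd) (P f) h0 htb'
    apply hn
    intro j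
    rw [← inner_conj_symm, mem_Kperp.1 (Koop_mem_Kperp hb j) v χ ⟨hv0, hχ⟩, map_zero]

lemma Kperp_eq_bot (hT : ∀ j, MeasurePreserving (T j) μ μ)
    (hTadd : ∀ i j, T (i + j) = T i ∘ T j)
    (herg : ∀ A : Set X, MeasurableSet A → (∀ j, T j ⁻¹' A = A) → μ A = 0 ∨ μ A = 1)
    (hns : ∀ f : X → ℂ, MemLp f 2 μ → ¬ MeanSensitiveFun μ T f) : Kperp hT = ⊥ := by
  rw [Submodule.eq_bot_iff]
  intro b hb
  have hbi : Integrable (b : X → ℂ) μ := (Lp.memLp b).integrable (by norm_num)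
  have h1 : ∀ B : Set X, MeasurableSet B → 2 * ∫ x in B, (b : X → ℂ) x ∂μ = ∫ x, (b : X → ℂ) x ∂μ := by
    intro B hB
    let f : X → ℂ := fun x => B.indicator (fun _ => (2 : ℂ)) x - 1
    have hfm : Measurable f := (measurable_const.indicator hB).sub measurable_const
    have hf1 : ∀ x, ‖f x‖ = 1 := by
      intro x
      by_cases hx : x ∈ B
      · simp only [f, Set.indicator_of_mem hx]; norm_num
      · simp only [f, Set.indicator_of_notMem hx]; norm_num
    have hf2 : MemLp f 2 μ := MemLp.of_bound hfm.aestronglyMeasurable 1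
      (Eventually.of_forall fun x => (hf1 x).le)
    have htb := totallyBounded_orbit hT hTadd herg hfm hf1 hf2 (hns f hf2)
    have hmem := mem_Kperp_perp_of_totallyBounded hTadd _ htb
    have h0 : inner ℂ (hf2.toLp f) b = 0 := (Submodule.mem_orthogonal' _ _).1 hmem b hb
    rw [L2.inner_def] at h0
    have e : ∫ x, inner ℂ ((hf2.toLp f : Lp ℂ 2 μ) x) ((b : X → ℂ) x) ∂μ =
        ∫ x, (B.indicator (fun x => 2 * (b : X → ℂ) x) x - (b : X → ℂ) x) ∂μ := by
      refine integral_congr_ae ?_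
      filter_upwards [hf2.coeFn_toLp] with x hx
      rw [hx]
      by_cases hxB : x ∈ B
      · simp [f, hxB]
        have h2 : (starRingEnd ℂ) 2 = 2 := map_ofNat _ 2
        try rw [h2]
        ring
      · simp [f, hxB]
    rw [e, integral_sub ((hbi.const_mul 2).indicator hB) hbi, integral_indicator hB,
      integral_const_mul, sub_eq_zero] at h0
    exact h0
  have h2 : ∫ x, (b : X → ℂ) x ∂μ = 0 := by
    have := h1 ∅ MeasurableSet.empty
    simpa using this.symm
  rw [Lp.eq_zero_iff_ae_eq_zero]
  refine hbi.ae_eq_zero_of_forall_setIntegral_eq_zero fun B hB _ => ?_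
  have := h1 B hB
  rw [h2] at this
  simpa using this

theorem discrete_of_nonsensitive (hT : ∀ j, MeasurePreserving (T j) μ μ)
    (hTadd : ∀ i j, T (i + j) = T i ∘ T j)
    (herg : ∀ A : Set X, MeasurableSet A → (∀ j, T j ⁻¹' A = A) → μ A = 0 ∨ μ A = 1)
    (hns : ∀ f : X → ℂ, MemLp f 2 μ → ¬ MeanSensitiveFun μ T f) : HasDiscreteSpectrum μ T := by
  let ι : Type := {χ : (Fin d → ℤ) → ℂ // ∃ v, EVchi hT χ v}
  have hex : ∀ χ : ι, ∃ v, EVchi hT χ.1 v ∧ ‖v‖ = 1 := by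
    rintro ⟨χ, v, hv⟩
    refine ⟨((‖v‖⁻¹ : ℝ) : ℂ) • v, ⟨?_, ?_⟩, ?_⟩
    · refine smul_ne_zero ?_ hv.1
      simpa using hv.1
    · intro j
      rw [map_smul, hv.2, smul_comm]
    · rw [norm_smul, Complex.norm_real, norm_inv, norm_norm, inv_mul_cancel₀]
      exact norm_ne_zero_iff.2 hv.1
  choose e he he1 using hex
  have hon : Orthonormal ℂ e := by
    refine ⟨he1, fun χ χ' hne => ?_⟩
    by_contra h0
    apply hne
    apply Subtype.ext
    funext j
    have h1 : inner ℂ (Koop hT j (e χ)) (Koop hT j (e χ')) = inner ℂ (e χ) (e χ') :=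
      LinearIsometry.inner_map_map _ _ _
    rw [(he χ).2, (he χ').2, inner_smul_left, inner_smul_right, ← mul_assoc] at h1
    have h2 : (starRingEnd ℂ) (χ.1 j) * χ'.1 j = 1 := mul_right_cancel₀ h0 (h1.trans (one_mul _).symm)
    have h3 : χ.1 j * (starRingEnd ℂ) (χ.1 j) = 1 := by
      rw [Complex.mul_conj, Complex.normSq_eq_norm_sq, (he χ).norm_one]
      simp
    calc χ.1 j = χ.1 j * ((starRingEnd ℂ) (χ.1 j) * χ'.1 j) := by rw [h2, mul_one]
      _ = χ'.1 j := by rw [← mul_assoc, h3, one_mul]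
  have hsp : (Submodule.span ℂ (Set.range e))ᗮ = ⊥ := by
    rw [eq_bot_iff, ← Kperp_eq_bot hT hTadd herg hns]
    intro b hb
    rw [mem_Kperp]
    intro v χ hv
    obtain ⟨c, hc⟩ := hv.unique hTadd herg (he ⟨χ, v, hv⟩)
    rw [hc, inner_smul_left, (Submodule.mem_orthogonal _ _).1 hb _
      (Submodule.subset_span ⟨_, rfl⟩), mul_zero]
  refine ⟨ι, HilbertBasis.mkOfOrthogonalEqBot hon hsp, fun i => ?_⟩
  rw [HilbertBasis.coe_mkOfOrthogonalEqBot]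
  exact (he i).isEigenfunction hTadd

end spectral

section maximal
variable {d : ℕ} [MeasurableSpace X] {μ : Measure X} [IsProbabilityMeasure μ]
    {T : (Fin d → ℤ) → X → X}

lemma vitali_count {d : ℕ} (φ : (Fin d → ℤ) → ℝ) (hφ : ∀ i, 0 ≤ φ i) (K M : ℕ) {l : ℝ}
    (hl : 0 < l) (B : Finset (Fin d → ℤ)) (hB : B ⊆ Fbox d K) (nn : (Fin d → ℤ) → ℕ)
    (hn : ∀ j ∈ B, 1 ≤ nn j ∧ nn j ≤ M ∧ l * (nn j : ℝ) ^ d < ∑ i ∈ Fbox d (nn j), φ (i + j)) :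
    l * (B.card : ℝ) ≤ 3 ^ d * ∑ i ∈ Fbox d (K + M), φ i := by
  obtain ⟨u, hut, hdis, hcov⟩ := Vitali.exists_disjoint_subfamily_covering_enlargement
    (fun j : Fin d → ℤ => (((Fbox d (nn j)).map (addRightEmbedding j) : Finset (Fin d → ℤ)) :
      Set (Fin d → ℤ))) (B : Set (Fin d → ℤ)) (fun j => (nn j : ℝ)) 2 (by norm_num)
    (fun a _ => Nat.cast_nonneg _) (M : ℝ)
    (fun a ha => Nat.cast_le.2 (hn a ha).2.1)
    (fun a ha => by
      refine ⟨a, ?_⟩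
      simp only [Finset.coe_map, Set.mem_image]
      refine ⟨0, ?_, by simp⟩
      rw [Finset.mem_coe, mem_Fbox]
      intro k
      have := (hn a ha).1
      simp only [Pi.zero_apply]
      omega)
  set U : Finset (Fin d → ℤ) := B.filter (· ∈ u) with hU
  have memU : ∀ j, j ∈ U ↔ j ∈ u := fun j => by
    rw [hU, Finset.mem_filter]
    exact ⟨fun h => h.2, fun h => ⟨hut h, h⟩⟩
  have memC : ∀ a i : Fin d → ℤ, i ∈ (Fbox d (nn a)).map (addRightEmbedding a) ↔
      ∀ k, a k ≤ i k ∧ i k < a k + nn a := by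
    intro a i
    rw [Finset.mem_map]
    constructor
    · rintro ⟨m, hm, rfl⟩ k
      have := mem_Fbox.1 hm k
      simp only [addRightEmbedding_apply, Pi.add_apply]
      omega
    · intro h
      refine ⟨i - a, mem_Fbox.2 fun k => ?_, by simp⟩
      have := h k
      simp only [Pi.sub_apply]
      omega
  -- covering
  have h1 : B ⊆ U.biUnion fun b =>
      Fintype.piFinset fun k => Finset.Icc (b k - 2 * nn b) (b k + nn b - 1) := by
    intro a ha
    obtain ⟨b, hb, ⟨i, hia, hib⟩, hab⟩ := hcov a ha
    rw [Finset.mem_biUnion]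
    refine ⟨b, (memU b).2 hb, ?_⟩
    rw [Fintype.mem_piFinset]
    intro k
    have h1 := (memC a i).1 hia k
    have h2 := (memC b i).1 hib k
    have h3 : nn a ≤ 2 * nn b := by exact_mod_cast hab
    rw [Finset.mem_Icc]
    omega
  have h2 : (B.card : ℝ) ≤ ∑ b ∈ U, 3 ^ d * (nn b : ℝ) ^ d := by
    have := (Finset.card_le_card h1).trans Finset.card_biUnion_le
    refine (Nat.cast_le.2 this).trans ?_
    rw [Nat.cast_sum]
    refine Finset.sum_le_sum fun b _ => ?_
    rw [Fintype.card_piFinset]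
    simp only [Int.card_Icc]
    have : ∀ k : Fin d, (b k + nn b - 1 + 1 - (b k - 2 * nn b)).toNat = 3 * nn b := by
      intro k; omega
    simp only [this]
    simp [mul_pow]
  have h3 : ∑ b ∈ U, l * (nn b : ℝ) ^ d ≤ ∑ i ∈ Fbox d (K + M), φ i := by
    have hd : (U : Set (Fin d → ℤ)).PairwiseDisjoint
        fun j => (Fbox d (nn j)).map (addRightEmbedding j) := by
      intro a ha b hb hab
      have := hdis ((memU a).1 ha) ((memU b).1 hb) hab
      exact Finset.disjoint_coe.1 this
    calc ∑ b ∈ U, l * (nn b : ℝ) ^ d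
        ≤ ∑ b ∈ U, ∑ i ∈ (Fbox d (nn b)).map (addRightEmbedding b), φ i := by
          refine Finset.sum_le_sum fun b hb => ?_
          rw [Finset.sum_map]
          exact (hn b (hut ((memU b).1 hb))).2.2.le
      _ = ∑ i ∈ U.biUnion fun j => (Fbox d (nn j)).map (addRightEmbedding j), φ i :=
          (Finset.sum_biUnion hd).symm
      _ ≤ _ := by
          refine Finset.sum_le_sum_of_subset_of_nonneg ?_ fun i _ _ => hφ i
          intro i hi
          obtain ⟨b, hb, hib⟩ := Finset.mem_biUnion.1 hi
          have hbB : b ∈ B := hut ((memU b).1 hb)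
          have hM := (hn b hbB).2.1
          refine mem_Fbox.2 fun k => ?_
          have e1 := (memC b i).1 hib k
          have e2 := mem_Fbox.1 (hB hbB) k
          push_cast
          omega
  calc l * (B.card : ℝ) ≤ l * ∑ b ∈ U, 3 ^ d * (nn b : ℝ) ^ d :=
        mul_le_mul_of_nonneg_left h2 hl.le
    _ = 3 ^ d * ∑ b ∈ U, l * (nn b : ℝ) ^ d := by
        rw [Finset.mul_sum, Finset.mul_sum]
        exact Finset.sum_congr rfl fun _ _ => by ring
    _ ≤ _ := mul_le_mul_of_nonneg_left h3 (by positivity)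

lemma maximal_fin (hT : ∀ j, MeasurePreserving (T j) μ μ)
    (hTadd : ∀ i j, T (i + j) = T i ∘ T j) {h : X → ℝ} (hh : Measurable h) (h0 : ∀ x, 0 ≤ h x)
    (hi : Integrable h μ) {l : ℝ} (hl : 0 < l) (M : ℕ) :
    l * μ.real {x | ∃ n, 1 ≤ n ∧ n ≤ M ∧ l < avgF T h n x} ≤ 3 ^ d * ∫ x, h x ∂μ := by
  set E : Set X := {x | ∃ n, 1 ≤ n ∧ n ≤ M ∧ l < avgF T h n x} with hE
  have hEm : MeasurableSet E := by
    have : E = ⋃ n ∈ Set.Icc 1 M, {x | l < avgF T h n x} := by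
      ext x; simp [hE, and_assoc]
    rw [this]
    exact MeasurableSet.biUnion (Set.to_countable _) fun n _ =>
      measurableSet_lt measurable_const (measurable_avgF hT hh n)
  have key : ∀ (K : ℕ) (x : X), l * ∑ j ∈ Fbox d K, E.indicator (fun _ => (1 : ℝ)) (T j x) ≤
      3 ^ d * ∑ i ∈ Fbox d (K + M), h (T i x) := by
    intro K x
    have hc : ∀ j, ∃ n : ℕ, T j x ∈ E → 1 ≤ n ∧ n ≤ M ∧ l < avgF T h n (T j x) := by
      intro j
      by_cases hj : T j x ∈ E
      · obtain ⟨n, hn⟩ := hj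
        exact ⟨n, fun _ => hn⟩
      · exact ⟨0, fun h => absurd h hj⟩
    choose nn hnn using hc
    have := vitali_count (fun i => h (T i x)) (fun i => h0 _) K M hl
      ((Fbox d K).filter fun j => T j x ∈ E) (Finset.filter_subset _ _) nn (by
        intro j hj
        obtain ⟨h1, h2, h3⟩ := hnn j (Finset.mem_filter.1 hj).2
        refine ⟨h1, h2, ?_⟩
        unfold avgF at h3
        have hp : (0 : ℝ) < (nn j : ℝ) ^ d := by
          have : (0 : ℝ) < nn j := Nat.cast_pos.2 h1
          positivity
        rw [card_Fbox, Nat.cast_pow, lt_div_iff₀ hp] at h3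
        simpa [hTadd] using h3)
    rw [Finset.card_filter, Nat.cast_sum] at this
    simpa [Set.indicator_apply] using this
  have key2 : ∀ K : ℕ, 1 ≤ K → l * μ.real E ≤
      3 ^ d * (((K + M : ℕ) : ℝ) ^ d / (K : ℝ) ^ d) * ∫ x, h x ∂μ := by
    intro K hK
    have hind : Integrable (E.indicator fun _ => (1 : ℝ)) μ :=
      (integrable_const 1).indicator hEm
    have hInt := integral_mono
      (μ := μ) (f := fun x => l * ∑ j ∈ Fbox d K, E.indicator (fun _ => (1 : ℝ)) (T j x))
      (g := fun x => 3 ^ d * ∑ i ∈ Fbox d (K + M), h (T i x))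
      (Integrable.const_mul (integrable_finsetSum _ fun j _ =>
        (hT j).integrable_comp_of_integrable hind) _)
      (Integrable.const_mul (integrable_finsetSum _ fun j _ =>
        (hT j).integrable_comp_of_integrable hi) _) (key K)
    rw [integral_const_mul, integral_const_mul] at hInt
    have e : ∀ (N : ℕ) (g : X → ℝ), Integrable g μ →  1 ≤ N →
        ∫ x, ∑ j ∈ Fbox d N, g (T j x) ∂μ = (N : ℝ) ^ d * ∫ x, g x ∂μ := by
      intro N g hg hN
      have := integral_avgF hT hg hN
      unfold avgF at this
      have hp : (0 : ℝ) < (N : ℝ) ^ d := by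
        have : (0 : ℝ) < N := Nat.cast_pos.2 hN
        positivity
      rw [integral_div, card_Fbox, Nat.cast_pow, div_eq_iff hp.ne'] at this
      rw [this, mul_comm]
    rw [e K _ hind hK, e (K + M) _ hi (by omega), integral_indicator_const _ hEm] at hInt
    have hp : (0 : ℝ) < (K : ℝ) ^ d := by
      have : (0 : ℝ) < K := Nat.cast_pos.2 hK
      positivity
    simp only [smul_eq_mul, mul_one] at hInt
    rw [← mul_le_mul_iff_right₀ hp]
    calc (K : ℝ) ^ d * (l * μ.real E) = l * ((K : ℝ) ^ d * μ.real E) := by ring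
      _ ≤ _ := hInt
      _ = _ := by field_simp
  have hlim : Tendsto (fun K : ℕ => 3 ^ d * (((K + M : ℕ) : ℝ) ^ d / (K : ℝ) ^ d) * ∫ x, h x ∂μ)
      atTop (nhds (3 ^ d * 1 * ∫ x, h x ∂μ)) := by
    refine Tendsto.mul_const _ (Tendsto.const_mul _ ?_)
    have h2 : Tendsto (fun n : ℕ => 1 + (M : ℝ) / (n : ℝ)) atTop (nhds (1 + 0)) :=
      tendsto_const_nhds.add (tendsto_const_div_atTop_nhds_zero_nat _)
    have h3 := h2.pow d
    rw [add_zero, one_pow] at h3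
    refine h3.congr' ?_
    filter_upwards [eventually_ge_atTop 1] with n hn
    have : (n : ℝ) ≠ 0 := Nat.cast_ne_zero.2 (by omega)
    rw [← div_pow]
    congr 1
    push_cast
    field_simp
  rw [mul_one] at hlim
  exact ge_of_tendsto hlim (by filter_upwards [eventually_ge_atTop 1] with K hK using key2 K hK)

lemma maximal_ineq (hT : ∀ j, MeasurePreserving (T j) μ μ)
    (hTadd : ∀ i j, T (i + j) = T i ∘ T j) {h : X → ℝ} (hh : Measurable h) (h0 : ∀ x, 0 ≤ h x)
    (hi : Integrable h μ) {l : ℝ} (hl : 0 < l) :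
    l * μ.real {x | ∃ n, 1 ≤ n ∧ l < avgF T h n x} ≤ 3 ^ d * ∫ x, h x ∂μ := by
  have e : {x | ∃ n, 1 ≤ n ∧ l < avgF T h n x} =
      ⋃ M : ℕ, {x | ∃ n, 1 ≤ n ∧ n ≤ M ∧ l < avgF T h n x} := by
    ext x
    simp only [Set.mem_ofPred_eq, Set.mem_iUnion]
    constructor
    · rintro ⟨n, h1, h2⟩
      exact ⟨n, n, h1, le_rfl, h2⟩
    · rintro ⟨M, n, h1, _, h2⟩
      exact ⟨n, h1, h2⟩
  have hmono : Monotone fun M : ℕ => {x | ∃ n, 1 ≤ n ∧ n ≤ M ∧ l < avgF T h n x} := by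
    intro a b hab x hx
    obtain ⟨n, h1, h2, h3⟩ := hx
    exact ⟨n, h1, h2.trans hab, h3⟩
  have ht : Tendsto (fun M : ℕ => μ.real {x | ∃ n, 1 ≤ n ∧ n ≤ M ∧ l < avgF T h n x}) atTop
      (nhds (μ.real {x | ∃ n, 1 ≤ n ∧ l < avgF T h n x})) := by
    rw [e]
    exact (ENNReal.tendsto_toReal (measure_ne_top _ _)).comp (tendsto_measure_iUnion_atTop hmono)
  exact le_of_tendsto (ht.const_mul l)
    (Eventually.of_forall fun M => maximal_fin hT hTadd hh h0 hi hl M)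

end maximal

section direct
variable {d : ℕ} [MeasurableSpace X] {μ : Measure X} [IsProbabilityMeasure μ]
    {T : (Fin d → ℤ) → X → X}

lemma integral_normSq_Lp (H : Lp ℂ 2 μ) : ∫ x, ‖(H : X → ℂ) x‖ ^ 2 ∂μ = ‖H‖ ^ 2 := by
  have h := inner_self_eq_norm_sq_to_K (𝕜 := ℂ) H
  rw [L2.inner_def] at h
  have e : ∀ x, inner ℂ ((H : X → ℂ) x) ((H : X → ℂ) x) = ((‖(H : X → ℂ) x‖ ^ 2 : ℝ) : ℂ) := by
    intro x
    rw [inner_self_eq_norm_sq_to_K]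
    push_cast
    rfl
  simp only [e] at h
  rw [integral_complex_ofReal] at h
  apply Complex.ofReal_injective
  rw [h]
  push_cast
  rfl

lemma norm_exp_char (w : Fin d → ℝ) (j : Fin d → ℤ) :
    ‖Complex.exp (2 * Real.pi * Complex.I * ∑ k, (w k : ℂ) * (j k : ℂ))‖ = 1 := by
  have : (2 * Real.pi * Complex.I * ∑ k, (w k : ℂ) * (j k : ℂ)) =
      ((2 * Real.pi * ∑ k, w k * j k : ℝ) : ℂ) * Complex.I := by
    push_cast
    ring
  rw [this, Complex.norm_exp_ofReal_mul_I]

lemma avg_arith (a b q N : ℝ) (hN : N ≠ 0) :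
    3 * (a + b + N * q) / N = 3 * (a / N + b / N + q) := by
  field_simp

set_option maxHeartbeats 1600000 in
theorem nonsensitive_of_discrete (hT : ∀ j, MeasurePreserving (T j) μ μ)
    (hTadd : ∀ i j, T (i + j) = T i ∘ T j) (hds : HasDiscreteSpectrum μ T)
    (f : X → ℂ) (hf : MemLp f 2 μ) : ¬ MeanSensitiveFun μ T f := by
  rintro ⟨ε, hε, hsens⟩
  obtain ⟨ι, b, hb⟩ := hds
  choose hb0 w hw using hb
  set F : Lp ℂ 2 μ := hf.toLp f with hF
  set c : ι → ℂ := fun i => b.repr F i with hc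
  set l : ℝ := ε ^ 2 / 12 with hl
  have hlpos : 0 < l := by positivity
  have hsum : HasSum (fun i => c i • b i) F := b.hasSum_repr F
  obtain ⟨S, hS⟩ : ∃ S : Finset ι, 3 ^ d * ‖F - ∑ i ∈ S, c i • b i‖ ^ 2 < l := by
    have ht : Tendsto (fun S : Finset ι => 3 ^ d * ‖F - ∑ i ∈ S, c i • b i‖ ^ 2) atTop
        (nhds (3 ^ d * ‖F - F‖ ^ 2)) :=
      ((tendsto_const_nhds.sub hsum).norm.pow 2).const_mul _
    rw [sub_self, norm_zero, zero_pow two_ne_zero, mul_zero] at ht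
    exact (ht.eventually_lt_const hlpos).exists
  set H : Lp ℂ 2 μ := F - ∑ i ∈ S, c i • b i with hH
  set h : X → ℝ := fun x => ‖(H : X → ℂ) x‖ ^ 2 with hh
  have hhm : Measurable h := (Lp.stronglyMeasurable H).measurable.norm.pow_const 2
  have hhi : Integrable h μ := (Lp.memLp H).integrable_norm_pow (by norm_num)
  have hmax := maximal_ineq hT hTadd hhm (fun x => by positivity) hhi hlpos
  rw [integral_normSq_Lp] at hmax
  set E : Set X := {x | ∃ n, 1 ≤ n ∧ l < avgF T h n x} with hE
  have hEm : MeasurableSet E := by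
    have : E = ⋃ n ∈ Set.Ici 1, {x | l < avgF T h n x} := by
      ext x; simp [hE]
    rw [this]
    exact MeasurableSet.biUnion (Set.to_countable _) fun n _ =>
      measurableSet_lt measurable_const (measurable_avgF hT hhm n)
  have hE1 : μ E < 1 := by
    have h1 : l * μ.real E < l * 1 := by
      rw [mul_one]
      exact hmax.trans_lt hS
    have h2 := lt_of_mul_lt_mul_left h1 hlpos.le
    rw [measureReal_def] at h2
    rw [← ENNReal.toReal_lt_toReal (measure_ne_top _ _) ENNReal.one_ne_top]
    simpa using h2
  -- the good set
  have hsumae : ((∑ i ∈ S, c i • b i : Lp ℂ 2 μ) : X → ℂ) =ᵐ[μ]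
      fun x => ∑ i ∈ S, c i * (b i : X → ℂ) x := by
    have h1 := Lp.coeFn_finsetSum S (fun i => c i • b i)
    have h2 : ∀ᵐ x ∂μ, ∀ i ∈ S, ((c i • b i : Lp ℂ 2 μ) : X → ℂ) x = c i * (b i : X → ℂ) x := by
      rw [Finset.eventually_all]
      intro i _
      filter_upwards [Lp.coeFn_smul (c i) (b i)] with x hx
      rw [hx]; rfl
    filter_upwards [h1, h2] with x hx1 hx2
    rw [hx1, Finset.sum_apply]
    exact Finset.sum_congr rfl hx2
  have hdec : ∀ᵐ x ∂μ, f x = (H : X → ℂ) x + ∑ i ∈ S, c i * (b i : X → ℂ) x := by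
    filter_upwards [hsumae, hf.coeFn_toLp, Lp.coeFn_sub F (∑ i ∈ S, c i • b i)] with x h1 h2 h3
    rw [hH, h3, Pi.sub_apply, h1, hF, h2]
    ring
  have hgood : ∀ᵐ x ∂μ, (∀ j, f (T j x) = (H : X → ℂ) (T j x) +
      ∑ i ∈ S, c i * (b i : X → ℂ) (T j x)) ∧ ∀ i ∈ S, ∀ j, (b i : X → ℂ) (T j x) =
        Complex.exp (2 * Real.pi * Complex.I * ∑ k, (w i k : ℂ) * (j k : ℂ)) *
          (b i : X → ℂ) x := by
    refine Eventually.and ?_ ?_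
    · rw [ae_all_iff]
      exact fun j => (hT j).quasiMeasurePreserving.ae hdec
    · rw [Finset.eventually_all]
      intro i _
      rw [ae_all_iff]
      exact fun j => hw i j
  obtain ⟨G, hGsub, hGm, hGμ⟩ := eventually_iff_exists_mem.1 hgood |>.elim fun v hv =>
    (show ∃ G : Set X, G ⊆ v ∧ MeasurableSet G ∧ μ Gᶜ = 0 from
      ⟨(toMeasurable μ vᶜ)ᶜ, Set.compl_subset_comm.1 (subset_toMeasurable _ _),
        (measurableSet_toMeasurable _ _).compl, by
          rw [compl_compl, measure_toMeasurable]; exact hv.1⟩) |>.imp fun G hG =>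
      (show (∀ x ∈ G, _) ∧ _ ∧ _ from ⟨fun x hx => hv.2 x (hG.1 hx), hG.2.1, hG.2.2⟩)
  set A0 : Set X := Eᶜ ∩ G with hA0
  have hA0pos : 0 < μ A0 := by
    rw [pos_iff_ne_zero]
    intro h0
    have : (Set.univ : Set X) ⊆ E ∪ (A0 ∪ Gᶜ) := by
      intro x _
      by_cases hx : x ∈ E
      · exact Or.inl hx
      · by_cases hx' : x ∈ G
        · exact Or.inr (Or.inl ⟨hx, hx'⟩)
        · exact Or.inr (Or.inr hx')
    have h2 := measure_mono (μ := μ) this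
    rw [measure_univ] at h2
    have h3 := h2.trans ((measure_union_le _ _).trans
      (add_le_add le_rfl (measure_union_le A0 Gᶜ)))
    rw [h0, hGμ, add_zero, add_zero] at h3
    exact absurd hE1 (not_lt.2 h3)
  -- localisation
  set s : ℝ := ε / 4 with hs
  have hspos : 0 < s := by positivity
  set r : ℝ := s / (2 * (S.card + 1)) with hr
  have hrpos : 0 < r := by positivity
  set Φ : X → S → ℂ := fun x i => c i * (b i : X → ℂ) x with hΦ
  have hΦm : Measurable Φ := measurable_pi_lambda _ fun i =>
    (Lp.stronglyMeasurable (b i)).measurable.const_mul _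
  obtain ⟨m, hm⟩ : ∃ m : ℕ,
      0 < μ (A0 ∩ Φ ⁻¹' ball (TopologicalSpace.denseSeq (S → ℂ) m) r) := by
    by_contra hcon
    push Not at hcon
    have : A0 ⊆ ⋃ m : ℕ, A0 ∩ Φ ⁻¹' ball (TopologicalSpace.denseSeq (S → ℂ) m) r := by
      intro x hx
      obtain ⟨m, hm⟩ := (TopologicalSpace.denseRange_denseSeq (S → ℂ)).exists_dist_lt (Φ x) hrpos
      exact Set.mem_iUnion.2 ⟨m, hx, hm⟩
    have h2 := measure_mono_null this
      (measure_iUnion_null fun m => nonpos_iff_eq_zero.1 (hcon m))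
    exact hA0pos.ne' h2
  set A : Set X := A0 ∩ Φ ⁻¹' ball (TopologicalSpace.denseSeq (S → ℂ) m) r with hA
  have hAm : MeasurableSet A := (hEm.compl.inter hGm).inter (hΦm measurableSet_ball)
  obtain ⟨x, hx, y, hy, -, -, hxy⟩ := hsens A hAm hm
  have hdist : ∑ i ∈ S, ‖c i * ((b i : X → ℂ) x - (b i : X → ℂ) y)‖ ≤ s := by
    have h1 : ∀ i ∈ S, ‖c i * ((b i : X → ℂ) x - (b i : X → ℂ) y)‖ ≤ 2 * r := by
      intro i hi
      have e1 : dist (Φ x) (Φ y) ≤ 2 * r := by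
        have hx2 : dist (Φ x) (TopologicalSpace.denseSeq (S → ℂ) m) < r := hx.2
        have hy2 : dist (Φ y) (TopologicalSpace.denseSeq (S → ℂ) m) < r := hy.2
        have := dist_triangle_right (Φ x) (Φ y) (TopologicalSpace.denseSeq (S → ℂ) m)
        linarith
      have e2 := (dist_le_pi_dist (Φ x) (Φ y) ⟨i, hi⟩).trans e1
      rw [dist_eq_norm] at e2
      rw [mul_sub]
      exact e2
    refine (Finset.sum_le_sum h1).trans ?_
    rw [Finset.sum_const, nsmul_eq_mul, hr]
    have : (S.card : ℝ) * (2 * (s / (2 * (S.card + 1)))) = s * (S.card / (S.card + 1)) := by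
      field_simp
    rw [this]
    refine mul_le_of_le_one_right hspos.le ?_
    rw [div_le_one (by positivity)]
    linarith
  have hpt : ∀ j, ‖f (T j x) - f (T j y)‖ ^ 2 ≤ 3 * (h (T j x) + h (T j y) + s ^ 2) := by
    intro j
    obtain ⟨hx1, hx2⟩ := hGsub x hx.1.2
    obtain ⟨hy1, hy2⟩ := hGsub y hy.1.2
    have e : f (T j x) - f (T j y) = (H : X → ℂ) (T j x) - (H : X → ℂ) (T j y) +
        ∑ i ∈ S, Complex.exp (2 * Real.pi * Complex.I * ∑ k, (w i k : ℂ) * (j k : ℂ)) *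
          (c i * ((b i : X → ℂ) x - (b i : X → ℂ) y)) := by
      rw [hx1, hy1, add_sub_add_comm, ← Finset.sum_sub_distrib]
      congr 1
      refine Finset.sum_congr rfl fun i hi => ?_
      rw [hx2 i hi, hy2 i hi]
      ring
    have n1 : ‖∑ i ∈ S, Complex.exp (2 * Real.pi * Complex.I * ∑ k, (w i k : ℂ) * (j k : ℂ)) *
          (c i * ((b i : X → ℂ) x - (b i : X → ℂ) y))‖ ≤ s := by
      refine (norm_sum_le _ _).trans (le_trans (Finset.sum_le_sum fun i _ => ?_) hdist)
      rw [norm_mul, norm_exp_char, one_mul]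
    have n2 : ‖f (T j x) - f (T j y)‖ ≤ ‖(H : X → ℂ) (T j x)‖ + ‖(H : X → ℂ) (T j y)‖ + s := by
      rw [e]
      exact (norm_add_le _ _).trans (add_le_add (norm_sub_le _ _) n1)
    have n3 := pow_le_pow_left₀ (norm_nonneg _) n2 2
    refine n3.trans ?_
    simp only [hh]
    nlinarith [sq_nonneg (‖(H : X → ℂ) (T j x)‖ - ‖(H : X → ℂ) (T j y)‖),
      sq_nonneg (‖(H : X → ℂ) (T j x)‖ - s), sq_nonneg (‖(H : X → ℂ) (T j y)‖ - s)]
  have hle : ∀ z ∈ A, ∀ n, 1 ≤ n → avgF T h n z ≤ l := by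
    intro z hz n hn
    by_contra hcon
    exact hz.1.1 ⟨n, hn, not_le.1 hcon⟩
  have hdF : dF T f x y ≤ ε := by
    unfold dF
    refine limsup_le_of_le ?_ ?_
    · exact isCoboundedUnder_le_of_le atTop (x := 0) fun n => Real.sqrt_nonneg _
    · filter_upwards [eventually_ge_atTop 1] with n hn
      rw [← Real.sqrt_sq hε.le]
      apply Real.sqrt_le_sqrt
      have hp : (0 : ℝ) < ((Fbox d n).card : ℝ) := by
        rw [card_Fbox, Nat.cast_pow]
        have : (0 : ℝ) < n := Nat.cast_pos.2 hn
        positivity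
      have e1 := hle x hx n hn
      have e2 := hle y hy n hn
      unfold avgF at e1 e2
      calc (∑ j ∈ Fbox d n, ‖f (T j x) - f (T j y)‖ ^ 2) / ((Fbox d n).card : ℝ)
          ≤ (∑ j ∈ Fbox d n, 3 * (h (T j x) + h (T j y) + s ^ 2)) / ((Fbox d n).card : ℝ) :=
            div_le_div_of_nonneg_right (Finset.sum_le_sum fun j _ => hpt j) hp.le
        _ = 3 * ((∑ j ∈ Fbox d n, h (T j x)) / ((Fbox d n).card : ℝ) +
              (∑ j ∈ Fbox d n, h (T j y)) / ((Fbox d n).card : ℝ) + s ^ 2) := by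
            rw [← Finset.mul_sum, Finset.sum_add_distrib, Finset.sum_add_distrib,
              Finset.sum_const, nsmul_eq_mul]
            exact avg_arith _ _ _ _ hp.ne'
        _ ≤ 3 * (l + l + s ^ 2) := by linarith
        _ ≤ ε ^ 2 := by
            rw [hl, hs]
            nlinarith [sq_nonneg ε]
  exact absurd hxy (not_lt.2 hdF)

end direct

/-- an ergodic MPS has discrete spectrum iff no `f ∈ L²(X,μ)` is
`μ`-mean sensitive. -/
theorem stmt2 {d : ℕ}
    [MeasurableSpace X] (μ : Measure X) [IsProbabilityMeasure μ]
    (T : (Fin d → ℤ) → X → X)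
    (hT : ∀ j, MeasurePreserving (T j) μ μ)
    (hTadd : ∀ i j, T (i + j) = T i ∘ T j)
    (herg : ∀ A : Set X, MeasurableSet A → (∀ j, T j ⁻¹' A = A) → μ A = 0 ∨ μ A = 1) :
    HasDiscreteSpectrum μ T ↔ ∀ f : X → ℂ, MemLp f 2 μ → ¬ MeanSensitiveFun μ T f := by
  exact ⟨fun h f hf => nonsensitive_of_discrete hT hTadd h f hf,
    discrete_of_nonsensitive hT hTadd herg⟩
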